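/- (Converse direction of the corollary, element form.) Let f ∈ R be homogeneous and assume τ(f^{1−1/p}) ⊆ m but √τ(f^{1−1/p}) ≠ m. Then the sequence {M_e − (n+1)p^e}_{e ≥ e_0} is unbounded below: for every integer N there exist e ≥ e_0 and a homogeneous g ∈ R with g ∉ m^{[e]}, deg(g) − (n+1)p^e < −N, and f^{p−1}·g^p ∈ m^{[e+1]}. (Hence the Frobenius action on H^n_m(R/fR) fails to be injective in arbitrarily negative degrees.) -/

import Mathlib

/-!
Write `τ = τ(f^{1-1/p})`, `q = p^e`. Since `τ ⊆ m` and `√τ ≠ m`, some variable `x_i` has no power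
in `τ`, so for every `D` there is a `k`-linear functional `φ` on `R` killing `τ` with
`φ(x_i^D) ≠ 0`; composing with the projection to degree `D` gives a functional `φ_D` that kills
the homogeneous elements of `τ`. For `q > D` put `s = (q-1, …, q-1)` and
`g = ∑_{b ≤ s} φ_D(x^{s-b}) x^b` (`dualPoly`). This is Macaulay duality for the Gorenstein ring
`R/m^{[e]}`: `g` is homogeneous of degree `(n+1)(q-1) - D`, it is not in `m^{[e]}` because its
coefficient at `s - D e_i` is `φ_D(x_i^D)`, and `t g ∈ m^{[e]}` for each homogeneous `t ∈ τ`
(`coeff_mul_dualPoly_eq_zero`). Taking `D ≥ N` gives the degree bound.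

To get `f^{p-1} g^p ∈ m^{[e+1]}`, use the Cartier maps `Θ : R → R` sending `∑ u_γ x^γ` to
`∑ ψ(u_{α+pc}) x^c`, where `ψ : k → k` is `p⁻¹`-linear and `0 ≤ α_i < p`. They satisfy
`Θ(r^p u) = r Θ(u)` (`cartierMap_pow_mul`), so `Θ(f^{p-1}) ∈ τ` (`cartierMap_mem_testIdeal`), and
`Θ(f^{p-1})` is homogeneous; hence `Θ(f^{p-1} g^p) = g Θ(f^{p-1}) ∈ m^{[e]}`. As the maps `ψ`
separate points of `k`, this for all `Θ` forces `f^{p-1} g^p ∈ m^{[e+1]}`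
(`mem_bracketPow_of_cartierMap_mem`).
-/

open MvPolynomial

noncomputable section

/-- `I^{[e]}`-style bracket power: the ideal generated by `q`-th powers of elements of `I`. -/
def bracketPow {A : Type*} [CommRing A] (I : Ideal A) (q : ℕ) : Ideal A :=
  Ideal.span ((fun u => u ^ q) '' (I : Set A))

/-- The test ideal `τ(f^{1 - 1/p^e})`: the smallest ideal `a` with `f^{p^e - 1} ∈ a^{[e]}`. -/
def testIdeal {A : Type*} [CommRing A] (p : ℕ) (f : A) (e : ℕ) : Ideal A :=
  sInf {a : Ideal A | f ^ (p ^ e - 1) ∈ bracketPow a (p ^ e)}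

/-- The homogeneous maximal ideal `m = (x_0, ..., x_n)`. -/
def mxI (k : Type*) [Field k] (n : ℕ) : Ideal (MvPolynomial (Fin (n + 1)) k) :=
  Ideal.span (Set.range (X : Fin (n + 1) → MvPolynomial (Fin (n + 1)) k))

/-- The set of degrees of homogeneous elements of `(m^{[e]} : τ) \ m^{[e]}`. -/
def MeSet (k : Type*) [Field k] (n p : ℕ) (τ : Ideal (MvPolynomial (Fin (n + 1)) k))
    (e : ℕ) : Set ℕ :=
  {d : ℕ | ∃ g : MvPolynomial (Fin (n + 1)) k,
    g ∈ (bracketPow (mxI k n) (p ^ e)).colon τ ∧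
    g ∉ bracketPow (mxI k n) (p ^ e) ∧ g.IsHomogeneous d}

/-- `M_e`: the minimal degree of a homogeneous element of `(m^{[e]} : τ) \ m^{[e]}`. -/
def Me (k : Type*) [Field k] (n p : ℕ) (τ : Ideal (MvPolynomial (Fin (n + 1)) k))
    (e : ℕ) : ℕ :=
  sInf (MeSet k n p τ e)

/-- `e_0`: the least `e` with `τ ⊄ m^{[e]}`. -/
def e0 (k : Type*) [Field k] (n p : ℕ) (τ : Ideal (MvPolynomial (Fin (n + 1)) k)) : ℕ :=
  sInf {e : ℕ | ¬ τ ≤ bracketPow (mxI k n) (p ^ e)}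

/-! ### Bracket powers of the maximal ideal -/

section Helpers

variable {k : Type*} [Field k] {p : ℕ}

theorem bracketPow_mxI_eq [Fact p.Prime] [CharP k p] (n e : ℕ) :
    bracketPow (mxI k n) (p ^ e) =
      Ideal.span ((fun s => monomial s (1 : k)) ''
        Set.range (fun i : Fin (n + 1) => Finsupp.single i (p ^ e))) := by
  apply le_antisymm
  · rw [bracketPow, Ideal.span_le]
    rintro _ ⟨u, hu, rfl⟩
    have : mxI k n ≤ Ideal.comap (iterateFrobenius (MvPolynomial (Fin (n + 1)) k) p e)
        (Ideal.span ((fun s => monomial s (1 : k)) ''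
          Set.range (fun i : Fin (n + 1) => Finsupp.single i (p ^ e)))) := by
      rw [mxI, Ideal.span_le]
      rintro _ ⟨i, rfl⟩
      apply Ideal.subset_span
      exact ⟨_, ⟨i, rfl⟩, by simp [iterateFrobenius_def, X_pow_eq_monomial]⟩
    simpa [iterateFrobenius_def] using this hu
  · rw [Ideal.span_le]
    rintro _ ⟨_, ⟨i, rfl⟩, rfl⟩
    apply Ideal.subset_span
    exact ⟨X i, Ideal.subset_span ⟨i, rfl⟩, by simp [X_pow_eq_monomial]⟩

theorem mem_bracketPow_mxI [Fact p.Prime] [CharP k p] {n e : ℕ}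
    {u : MvPolynomial (Fin (n + 1)) k} :
    u ∈ bracketPow (mxI k n) (p ^ e) ↔
      ∀ c : Fin (n + 1) →₀ ℕ, (∀ i, c i < p ^ e) → coeff c u = 0 := by
  rw [bracketPow_mxI_eq, mem_ideal_span_monomial_image]
  constructor
  · intro h c hc
    by_contra h0
    obtain ⟨_, ⟨i, rfl⟩, hi⟩ := h c (mem_support_iff.2 h0)
    have := hc i
    rw [Finsupp.single_le_iff] at hi
    omega
  · intro h c hc
    by_contra h0
    push Not at h0
    refine mem_support_iff.1 hc (h c fun i => ?_)
    have := h0 _ ⟨i, rfl⟩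
    rw [Finsupp.single_le_iff] at this
    omega

theorem exists_X_notMem_radical {n : ℕ} {τ : Ideal (MvPolynomial (Fin (n + 1)) k)}
    (hτm : τ ≤ mxI k n) (hrad : τ.radical ≠ mxI k n) : ∃ i, X i ∉ τ.radical := by
  by_contra! h
  apply hrad
  apply le_antisymm
  · have hm : mxI k n = RingHom.ker (constantCoeff (σ := Fin (n + 1)) (R := k)) := by
      ext u
      rw [mxI, ← Set.image_univ, mem_ideal_span_X_image, RingHom.mem_ker, constantCoeff_eq]
      constructor
      · intro h
        by_contra h0
        obtain ⟨i, -, hi⟩ := h 0 (mem_support_iff.2 h0)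
        simp at hi
      · intro h c hc
        by_contra! h0
        have : c = 0 := by ext i; simpa using h0 i (Set.mem_univ i)
        subst this
        exact mem_support_iff.1 hc h
    rw [hm] at hτm ⊢
    exact (RingHom.ker_isPrime _).radical_le_iff.2 hτm
  · rw [mxI, Ideal.span_le]
    rintro _ ⟨i, rfl⟩
    exact h i

/-! ### Cartier maps -/

/-- Every nonzero element of `k` is detected by a `p⁻¹`-linear map `k → k`; such a map is a
linear functional on `k` viewed as a vector space over itself through Frobenius. -/
theorem exists_cartier_functional [Fact p.Prime] [CharP k p] {z : k} (hz : z ≠ 0) :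
    ∃ ψ : k →+ k, (∀ x y, ψ (x ^ p * y) = x * ψ y) ∧ ψ z ≠ 0 := by
  have key : ∀ (V : Type _) [AddCommGroup V] [Module k V] (z : V), z ≠ 0 →
      ∃ φ : V →ₗ[k] k, φ z ≠ 0 := by
    intro V _ _ z hz
    obtain ⟨φ, hφ, -⟩ := Submodule.exists_le_ker_of_notMem (K := k)
      (p := (⊥ : Submodule k V)) (v := z) (by simpa using hz)
    exact ⟨φ, hφ⟩
  obtain ⟨φ, hφ⟩ := @key k _ (Module.compHom k (frobenius k p)) z hz
  exact ⟨⟨⟨fun x => φ x, by simp⟩, fun x y => by simp⟩, fun x y =>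
    @LinearMap.map_smul _ _ _ _ _ _ (Module.compHom k (frobenius k p)) _ φ x y, hφ⟩

variable {σ : Type*}

open Classical in
/-- The `p⁻¹`-linear map `R → R` attached to a `p⁻¹`-linear map `ψ : k → k` and an exponent `α`:
it sends `∑ u_γ x^γ` to `∑ ψ(u_{α + p c}) x^c`. The sum runs over a finite set of exponents
which, when all entries of `α` are `< p`, contains every `c` with a nonzero contribution. -/
def cartierMap (p : ℕ) (ψ : k →+ k) (α : σ →₀ ℕ) (u : MvPolynomial σ k) : MvPolynomial σ k :=
  ∑ c ∈ u.support.image (fun γ => γ.mapRange (· / p) (Nat.zero_div p)),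
    monomial c (ψ (coeff (α + p • c) u))

theorem coeff_cartierMap {ψ : k →+ k} {α : σ →₀ ℕ} (hα : ∀ i, α i < p)
    (u : MvPolynomial σ k) (c : σ →₀ ℕ) :
    coeff c (cartierMap p ψ α u) = ψ (coeff (α + p • c) u) := by
  classical
  rw [cartierMap, coeff_sum]
  simp only [coeff_monomial]
  rw [Finset.sum_ite_eq']
  split_ifs with h
  · rfl
  · have : coeff (α + p • c) u = 0 := by
      by_contra h0
      apply h
      refine Finset.mem_image.2 ⟨_, mem_support_iff.2 h0, ?_⟩
      ext i
      have := hα i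
      simp only [Finsupp.mapRange_apply, Finsupp.add_apply, Finsupp.smul_apply, smul_eq_mul]
      rw [Nat.add_mul_div_left _ _ (by omega), Nat.div_eq_of_lt this, zero_add]
    rw [this, map_zero]

theorem cartierMap_add {ψ : k →+ k} {α : σ →₀ ℕ} (hα : ∀ i, α i < p)
    (u v : MvPolynomial σ k) :
    cartierMap p ψ α (u + v) = cartierMap p ψ α u + cartierMap p ψ α v := by
  ext c
  simp [coeff_cartierMap hα]

theorem cartierMap_pow_mul [Fact p.Prime] [CharP k p] {ψ : k →+ k}
    (hψ : ∀ x y, ψ (x ^ p * y) = x * ψ y) {α : σ →₀ ℕ} (hα : ∀ i, α i < p)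
    (r u : MvPolynomial σ k) :
    cartierMap p ψ α (r ^ p * u) = r * cartierMap p ψ α u := by
  induction r using MvPolynomial.induction_on' with
  | monomial s a =>
    ext c
    rw [coeff_cartierMap hα, monomial_pow, coeff_monomial_mul', coeff_monomial_mul']
    have hp : 0 < p := (Fact.out : p.Prime).pos
    have hiff : p • s ≤ α + p • c ↔ s ≤ c := by
      constructor
      · intro h i
        have h1 := h i
        have h2 := hα i
        simp only [Finsupp.add_apply, Finsupp.smul_apply, smul_eq_mul] at h1
        by_contra! h3
        nlinarith
      · intro h i
        have := Nat.mul_le_mul_left p (h i)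
        simp only [Finsupp.add_apply, Finsupp.smul_apply, smul_eq_mul]
        omega
    by_cases h : s ≤ c
    · rw [if_pos h, if_pos (hiff.2 h), hψ, coeff_cartierMap hα]
      congr 3
      obtain ⟨b, rfl⟩ := le_iff_exists_add.1 h
      rw [add_tsub_cancel_left, smul_add, add_left_comm, add_tsub_cancel_left]
    · rw [if_neg h, if_neg (fun h' => h (hiff.1 h')), map_zero]
  | add r₁ r₂ h₁ h₂ => rw [add_pow_char, add_mul, add_mul, cartierMap_add hα, h₁, h₂]

/-- Cartier maps send `f^{p-1}` into the test ideal: they carry `b^{[p]}` into `b`. -/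
theorem cartierMap_mem_testIdeal [Fact p.Prime] [CharP k p] {ψ : k →+ k}
    (hψ : ∀ x y, ψ (x ^ p * y) = x * ψ y) {α : σ →₀ ℕ} (hα : ∀ i, α i < p)
    (f : MvPolynomial σ k) : cartierMap p ψ α (f ^ (p - 1)) ∈ testIdeal p f 1 := by
  rw [testIdeal, Ideal.mem_sInf]
  intro b hb
  simp only [Set.mem_ofPred_eq, pow_one] at hb
  have h0 : cartierMap p ψ α 0 = 0 := by
    ext c
    simp [coeff_cartierMap hα]
  have key : ∀ x ∈ bracketPow b p, ∀ a, cartierMap p ψ α (a * x) ∈ b := by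
    intro x hx
    induction hx using Submodule.span_induction with
    | mem x hx =>
      obtain ⟨u, hu, rfl⟩ := hx
      intro a
      rw [mul_comm, cartierMap_pow_mul hψ hα]
      exact b.mul_mem_right _ hu
    | zero => intro a; simp [h0]
    | add x y _ _ hx hy =>
      intro a
      rw [mul_add, cartierMap_add hα]
      exact b.add_mem (hx a) (hy a)
    | smul r x _ hx =>
      intro a
      rw [smul_eq_mul, ← mul_assoc]
      exact hx _
  simpa using key _ hb 1

theorem cartierMap_isHomogeneous [Fact p.Prime] {ψ : k →+ k} {α : σ →₀ ℕ}
    (hα : ∀ i, α i < p) {u : MvPolynomial σ k} {d : ℕ} (hu : u.IsHomogeneous d) :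
    (cartierMap p ψ α u).IsHomogeneous ((d - α.degree) / p) := by
  have hp : 0 < p := (Fact.out : p.Prime).pos
  intro c hc
  rw [coeff_cartierMap hα] at hc
  have h1 : coeff (α + p • c) u ≠ 0 := fun h => hc (by rw [h, map_zero])
  have h2 := hu h1
  rw [Pi.one_def, ← Finsupp.degree_eq_weight_one] at h2 ⊢
  rw [← h2, map_add, map_nsmul, add_tsub_cancel_left, smul_eq_mul, Nat.mul_div_cancel_left _ hp]

/-- A polynomial `u` lies in `m^{[e+1]}` as soon as all its images under Cartier maps lie in
`m^{[e]}`. -/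
theorem mem_bracketPow_of_cartierMap_mem [Fact p.Prime] [CharP k p] {n e : ℕ}
    {u : MvPolynomial (Fin (n + 1)) k}
    (h : ∀ (ψ : k →+ k), (∀ x y, ψ (x ^ p * y) = x * ψ y) → ∀ α : Fin (n + 1) →₀ ℕ,
      (∀ i, α i < p) → cartierMap p ψ α u ∈ bracketPow (mxI k n) (p ^ e)) :
    u ∈ bracketPow (mxI k n) (p ^ (e + 1)) := by
  have hp : 0 < p := (Fact.out : p.Prime).pos
  rw [mem_bracketPow_mxI]
  intro γ hγ
  by_contra h0
  obtain ⟨ψ, hψ, hz⟩ := exists_cartier_functional (p := p) h0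
  let α : Fin (n + 1) →₀ ℕ := γ.mapRange (· % p) (Nat.zero_mod p)
  let β : Fin (n + 1) →₀ ℕ := γ.mapRange (· / p) (Nat.zero_div p)
  have hα : ∀ i, α i < p := fun i => Nat.mod_lt _ hp
  have hγ' : γ = α + p • β := by
    ext i
    simp [α, β, Nat.mod_add_div]
  have h1 := mem_bracketPow_mxI.1 (h ψ hψ α hα) β fun i => by
    have := hγ i
    rw [pow_succ] at this
    exact Nat.div_lt_of_lt_mul (by rwa [mul_comm])
  rw [coeff_cartierMap hα, ← hγ'] at h1
  exact hz h1

/-! ### Inverse systems -/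

open Classical in
/-- Given a function `w` on exponents, the polynomial `∑_{b ≤ s} w(s - b) x^b`: the
element dual to `w` under the pairing `(u, v) ↦ coeff_s (u v)`. -/
def dualPoly (s : σ →₀ ℕ) (w : (σ →₀ ℕ) → k) : MvPolynomial σ k :=
  ∑ b ∈ Finset.Icc 0 s, monomial b (w (s - b))

theorem coeff_dualPoly {s b : σ →₀ ℕ} (hb : b ≤ s) (w : (σ →₀ ℕ) → k) :
    coeff b (dualPoly s w) = w (s - b) := by
  classical
  rw [dualPoly, coeff_sum]
  simp only [coeff_monomial]
  rw [Finset.sum_ite_eq', if_pos (by simpa using hb)]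

theorem dualPoly_isHomogeneous {s : σ →₀ ℕ} {w : (σ →₀ ℕ) → k} {D : ℕ}
    (hw : ∀ c, c.degree ≠ D → w c = 0) :
    (dualPoly s w).IsHomogeneous (s.degree - D) := by
  apply IsHomogeneous.sum
  intro b hb
  have hb : b ≤ s := by simpa using hb
  by_cases h : (s - b).degree = D
  · apply isHomogeneous_monomial
    have : s.degree = (s - b).degree + b.degree := by
      rw [← map_add, tsub_add_cancel_of_le hb]
    omega
  · rw [hw _ h, monomial_zero]
    exact isHomogeneous_zero _ _ _

/-- If the functional `x^c ↦ w c` is supported on exponents `≤ s` and kills all monomial multiples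
of `t`, then `t` times the dual polynomial has no terms with exponent `≤ s`. -/
theorem coeff_mul_dualPoly_eq_zero {s : σ →₀ ℕ} {w : (σ →₀ ℕ) → k}
    (hs : ∀ c, ¬ c ≤ s → w c = 0) {t : MvPolynomial σ k}
    (ht : ∀ c, ∑ δ ∈ t.support, coeff δ t * w (δ + c) = 0) {β : σ →₀ ℕ} (hβ : β ≤ s) :
    coeff β (t * dualPoly s w) = 0 := by
  classical
  rw [coeff_mul, ← ht (s - β)]
  symm
  refine Finset.sum_bij_ne_zero (fun δ _ _ => (δ, β - δ)) ?_ ?_ ?_ ?_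
  · intro δ _ h
    have h1 : δ + (s - β) ≤ s := by
      by_contra h2
      exact h (by rw [hs _ h2, mul_zero])
    rw [Finset.HasAntidiagonal.mem_antidiagonal]
    refine add_tsub_cancel_of_le fun i => ?_
    change δ i ≤ β i
    have h2 := h1 i
    have h3 := hβ i
    simp only [Finsupp.add_apply, Finsupp.tsub_apply] at h2
    omega
  · intro a _ _ b _ _ h
    exact congrArg Prod.fst h
  · rintro ⟨x, y⟩ hxy h
    rw [Finset.HasAntidiagonal.mem_antidiagonal] at hxy
    simp only at hxy h
    subst hxy
    have hx : x ∈ t.support := mem_support_iff.2 (left_ne_zero_of_mul h)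
    refine ⟨x, hx, ?_, by simp⟩
    rw [coeff_dualPoly (le_trans le_add_self hβ)] at h
    convert h using 3
    ext i
    have := hβ i
    simp only [Finsupp.add_apply, Finsupp.tsub_apply] at *
    omega
  · intro δ _ h
    have h1 : δ + (s - β) ≤ s := by
      by_contra h2
      exact h (by rw [hs _ h2, mul_zero])
    have h4 : β - δ ≤ s := le_trans tsub_le_self hβ
    rw [coeff_dualPoly h4]
    congr 2
    ext i
    have h2 := h1 i
    have h3 := hβ i
    simp only [Finsupp.add_apply, Finsupp.tsub_apply] at *
    omega

end Helpers

/-- Converse direction of the corollary, element form: If `f` is homogeneous,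
`τ(f^{1−1/p}) ⊆ m` but `√τ(f^{1−1/p}) ≠ m`, then for every integer `N` there exist `e ≥ e_0`
and a homogeneous `g ∉ m^{[e]}` with `deg g − (n+1)p^e < −N` and `f^{p−1}·g^p ∈ m^{[e+1]}`. -/
theorem Me_unbounded_below_of_not_isolated {k : Type*} [Field k] {p n : ℕ}
    [Fact p.Prime] [CharP k p]
    (f : MvPolynomial (Fin (n + 1)) k) (d : ℕ) (hf : f.IsHomogeneous d)
    (hτm : testIdeal p f 1 ≤ mxI k n)
    (hrad : (testIdeal p f 1).radical ≠ mxI k n) :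
    ∀ N : ℤ, ∃ e : ℕ, e0 k n p (testIdeal p f 1) ≤ e ∧
      ∃ g : MvPolynomial (Fin (n + 1)) k, ∃ dg : ℕ,
        g.IsHomogeneous dg ∧ g ∉ bracketPow (mxI k n) (p ^ e) ∧
        (dg : ℤ) - (n + 1) * p ^ e < -N ∧
        f ^ (p - 1) * g ^ p ∈ bracketPow (mxI k n) (p ^ (e + 1)) := by
  intro N
  obtain ⟨i, hi⟩ := exists_X_notMem_radical hτm hrad
  set τ := testIdeal p f 1 with hτ
  have hp2 : 2 ≤ p := (Fact.out : p.Prime).two_le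
  set D := N.toNat with hD
  have hXD : X i ^ D ∉ τ := fun h => hi ⟨D, h⟩
  -- a linear functional in degree `D` that kills `τ` but not `x_i^D`
  obtain ⟨φ, hφX, hφτ⟩ := Submodule.exists_le_ker_of_notMem (K := k)
    (p := τ.restrictScalars k) (v := X i ^ D) (by simpa using hXD)
  set φD := φ ∘ₗ homogeneousComponent D with hφD
  have hφDX : φD (X i ^ D) ≠ 0 := by
    rwa [hφD, LinearMap.comp_apply, homogeneousComponent_eq_self (isHomogeneous_X_pow i D)]
  have hφDτ : ∀ (t : MvPolynomial (Fin (n + 1)) k) (j : ℕ), t ∈ τ → t.IsHomogeneous j →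
      φD t = 0 := by
    intro t j ht hj
    rw [hφD, LinearMap.comp_apply, homogeneousComponent_of_mem hj]
    split_ifs
    · exact hφτ ht
    · exact map_zero _
  let w : (Fin (n + 1) →₀ ℕ) → k := fun c => φD (monomial c 1)
  have hwdeg : ∀ c, c.degree ≠ D → w c = 0 := by
    intro c hc
    simp only [w, hφD, LinearMap.comp_apply]
    rw [homogeneousComponent_of_mem (isHomogeneous_monomial 1 rfl), if_neg (Ne.symm hc), map_zero]
  set e := max (e0 k n p τ) D with he
  have hDq : D < p ^ e :=
    lt_of_le_of_lt (le_max_right _ _) (Nat.lt_pow_self (by omega))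
  let s : Fin (n + 1) →₀ ℕ := Finsupp.equivFunOnFinite.symm (fun _ => p ^ e - 1)
  have hs : ∀ c : Fin (n + 1) →₀ ℕ, c ≤ s ↔ ∀ i, c i < p ^ e := by
    intro c
    refine forall_congr' fun j => ?_
    change c j ≤ p ^ e - 1 ↔ _
    omega
  have hws : ∀ c, ¬ c ≤ s → w c = 0 := by
    intro c hc
    apply hwdeg
    rintro hcD
    apply hc
    rw [hs]
    intro j
    exact lt_of_le_of_lt (Finsupp.le_degree j c) (hcD ▸ hDq)
  have hsdeg : s.degree = (n + 1) * (p ^ e - 1) := by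
    rw [Finsupp.degree_eq_sum]
    simp [s]
  refine ⟨e, le_max_left _ _, dualPoly s w, s.degree - D, dualPoly_isHomogeneous hwdeg,
    ?_, ?_, ?_⟩
  · intro hmem
    have hle : Finsupp.single i D ≤ s := by
      rw [Finsupp.single_le_iff]
      change D ≤ p ^ e - 1
      omega
    have h1 := mem_bracketPow_mxI.1 hmem (s - Finsupp.single i D) ((hs _).1 tsub_le_self)
    rw [coeff_dualPoly tsub_le_self, tsub_tsub_cancel_of_le hle] at h1
    apply hφDX
    rwa [X_pow_eq_monomial]
  · have hDs : D ≤ s.degree := by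
      rw [hsdeg]
      nlinarith [Nat.sub_add_cancel (show 1 ≤ p ^ e by omega), Nat.zero_le (n * (p ^ e - 1))]
    have hND : N ≤ D := Int.self_le_toNat N
    rw [Nat.cast_sub hDs, hsdeg]
    push_cast [show 1 ≤ p ^ e by omega]
    nlinarith
  · apply mem_bracketPow_of_cartierMap_mem
    intro ψ hψ α hα
    rw [mul_comm, cartierMap_pow_mul hψ hα, mul_comm, mem_bracketPow_mxI]
    intro β hβ
    refine coeff_mul_dualPoly_eq_zero hws (fun c => ?_) ((hs β).2 hβ)
    have ht := cartierMap_mem_testIdeal hψ hα f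
    have hth := cartierMap_isHomogeneous (ψ := ψ) hα (hf.pow (p - 1))
    set t := cartierMap p ψ α (f ^ (p - 1)) with htdef
    -- the sum is the value of the functional at `t * x^c`, a homogeneous element of `τ`
    have h0 := hφDτ (t * monomial c 1) _ (τ.mul_mem_right _ ht)
      (hth.mul (isHomogeneous_monomial 1 rfl))
    rw [← h0]
    conv_rhs => rw [t.as_sum, Finset.sum_mul, map_sum]
    refine Finset.sum_congr rfl fun δ _ => ?_
    rw [monomial_mul, mul_one, ← mul_one (coeff δ t), ← smul_eq_mul (coeff δ t) 1,
      ← smul_monomial, map_smul]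
    simp [w]

end
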